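/- arXiv:2601.10237 — 3 statements merged into one kernel-verified Lean document; each statement's English description precedes it below -/
import Mathlib

section
/- Let M ≥ 2 be an integer and let σ = s/√(ln M) for some real s with 0 < s ≤ 1/√2. Define a* := 1 − Φ(1/σ)^M. Then a* ≤ 1/√(4π·ln M). -/
open MeasureTheory Real

/-- The standard normal cumulative distribution function
`Φ(x) = (1/√(2π)) ∫_{−∞}^x e^{−t²/2} dt`. -/
noncomputable def stdNormalCDF (x : ℝ) : ℝ :=
  ∫ t in Set.Iic x, Real.exp (-t ^ 2 / 2) / Real.sqrt (2 * Real.pi)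

lemma aux_integrable : Integrable (fun t : ℝ => Real.exp (-t ^ 2 / 2)) := by
  have h := integrable_exp_neg_mul_sq (b := 1/2) (by norm_num)
  refine h.congr (Filter.Eventually.of_forall fun t => ?_)
  simp only
  congr 1
  ring

lemma aux_integrable_mul : Integrable (fun t : ℝ => t * Real.exp (-t ^ 2 / 2)) := by
  have h := integrable_mul_exp_neg_mul_sq (b := 1/2) (by norm_num)
  refine h.congr (Filter.Eventually.of_forall fun t => ?_)
  simp only
  congr 2
  ring

lemma aux_total : ∫ t : ℝ, Real.exp (-t ^ 2 / 2) = Real.sqrt (2 * Real.pi) := by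
  have h := integral_gaussian (1/2)
  rw [show Real.pi / (1/2) = 2 * Real.pi by ring] at h
  rw [← h]
  congr 1
  ext t
  congr 1
  ring

lemma aux_moment (x : ℝ) :
    ∫ t in Set.Ioi x, t * Real.exp (-t ^ 2 / 2) = Real.exp (-x ^ 2 / 2) := by
  have hd : ∀ t ∈ Set.Ici x, HasDerivAt (fun t : ℝ => -Real.exp (-t ^ 2 / 2))
      (t * Real.exp (-t ^ 2 / 2)) t := by
    intro t _
    have h1 : HasDerivAt (fun t : ℝ => -t ^ 2 / 2) (-t) t := by
      have := ((hasDerivAt_pow 2 t).neg).div_const 2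
      exact this.congr_deriv (by norm_num; ring)
    exact h1.exp.neg.congr_deriv (by ring)
  have ht : Filter.Tendsto (fun t : ℝ => -Real.exp (-t ^ 2 / 2)) Filter.atTop (nhds 0) := by
    rw [← neg_zero]
    refine Filter.Tendsto.neg (Real.tendsto_exp_atBot.comp ?_)
    have h2 : Filter.Tendsto (fun t : ℝ => t ^ 2 / 2) Filter.atTop Filter.atTop :=
      (Filter.tendsto_pow_atTop (by norm_num)).atTop_div_const (by norm_num)
    have h3 := Filter.tendsto_neg_atTop_atBot.comp h2
    refine h3.congr fun t => ?_
    simp only [Function.comp]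
    ring
  have := integral_Ioi_of_hasDerivAt_of_tendsto' hd aux_integrable_mul.integrableOn ht
  rw [this]; ring

lemma aux_tail (x : ℝ) (hx : 0 < x) :
    ∫ t in Set.Ioi x, Real.exp (-t ^ 2 / 2) ≤ Real.exp (-x ^ 2 / 2) / x := by
  rw [← aux_moment x, ← integral_div]
  refine setIntegral_mono_on aux_integrable.integrableOn
    (aux_integrable_mul.div_const x).integrableOn measurableSet_Ioi ?_
  intro t ht
  rw [le_div_iff₀ hx, mul_comm]
  exact mul_le_mul_of_nonneg_right (le_of_lt ht) (Real.exp_pos _).le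

lemma aux_cdf (x : ℝ) (hx : 0 < x) :
    1 - stdNormalCDF x ≤ Real.exp (-x ^ 2 / 2) / x / Real.sqrt (2 * Real.pi) := by
  have hp : 0 < Real.sqrt (2 * Real.pi) := by positivity
  have h := integral_add_compl (μ := volume) (measurableSet_Iic (a := x)) aux_integrable
  rw [Set.compl_Iic, aux_total] at h
  unfold stdNormalCDF
  rw [integral_div, le_div_iff₀ hp, sub_mul, div_mul_cancel₀ _ hp.ne']
  linarith [aux_tail x hx]

/-- Lemma 6.2: for `M ≥ 2` and `σ = s/√(ln M)` with `0 < s ≤ 1/√2`,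
the quantity `a* = 1 − Φ(1/σ)^M` satisfies `a* ≤ 1/√(4π ln M)`. -/
theorem astar_le_one_div_sqrt_four_pi_log
    (M : ℕ) (hM : 2 ≤ M) (s σ : ℝ) (hs0 : 0 < s) (hs : s ≤ 1 / Real.sqrt 2)
    (hσ : σ = s / Real.sqrt (Real.log M)) :
    1 - stdNormalCDF (1 / σ) ^ M ≤ 1 / Real.sqrt (4 * Real.pi * Real.log M) := by
  have hM1 : (1 : ℝ) < M := by exact_mod_cast hM
  have hM0 : (0 : ℝ) < M := by linarith
  have hL : 0 < Real.log M := Real.log_pos hM1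
  have hy0 : 0 < Real.sqrt (2 * Real.log M) := by positivity
  have hσ0 : 0 < σ := by rw [hσ]; positivity
  have hxy : Real.sqrt (2 * Real.log M) ≤ 1 / σ := by
    rw [hσ, one_div_div, Real.sqrt_mul (by norm_num), le_div_iff₀ hs0]
    rw [le_div_iff₀ (by positivity)] at hs
    nlinarith [Real.sqrt_pos.2 hL]
  have hx0 : 0 < 1 / σ := by positivity
  generalize 1 / σ = x at *
  have hq := aux_cdf x hx0
  have hnn : 0 ≤ stdNormalCDF x := integral_nonneg fun t => by positivity
  have hb := one_add_mul_le_pow (a := stdNormalCDF x - 1) (by linarith) M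
  rw [show 1 + (stdNormalCDF x - 1) = stdNormalCDF x by ring] at hb
  have he : Real.exp (-x ^ 2 / 2) ≤ 1 / M := by
    rw [one_div, ← Real.exp_log hM0, ← Real.exp_neg, Real.exp_le_exp]
    have h1 := Real.sq_sqrt (show 0 ≤ 2 * Real.log M by positivity)
    nlinarith
  have hfin : Real.exp (-x ^ 2 / 2) / x / Real.sqrt (2 * Real.pi)
      ≤ (1 / M) / Real.sqrt (2 * Real.log M) / Real.sqrt (2 * Real.pi) := by
    gcongr
  have hs4 : Real.sqrt (4 * Real.pi * Real.log M)
      = Real.sqrt (2 * Real.log M) * Real.sqrt (2 * Real.pi) := by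
    rw [← Real.sqrt_mul (by positivity)]
    congr 1
    ring
  have hm := mul_le_mul_of_nonneg_left (hq.trans hfin) hM0.le
  have hr : (M : ℝ) * ((1 / M) / Real.sqrt (2 * Real.log M) / Real.sqrt (2 * Real.pi))
      = 1 / Real.sqrt (4 * Real.pi * Real.log M) := by
    rw [hs4]
    field_simp
  rw [hr] at hm
  linarith
end

section
/- Let f : [0,1] → [0,1] be continuous, convex, nonincreasing, and symmetric in the sense that f(f(α)) = α for all α ∈ [0,1]. Then f has a unique fixed point â with f(â) = â, this fixed point satisfies 0 < â ≤ 1/2, and max_{α∈[0,1]} ((1−α) − f(α))/√2 = (1 − 2â)/√2. Moreover, if f is not identically equal to the map α ↦ 1−α, then 0 < (1 − 2â)/√2 < 1/√2. -/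
open Real

/-- Lemma 5.3: a continuous, convex, nonincreasing trade-off function
`f : [0,1] → [0,1]` that is symmetric (`f(f(α)) = α` on `[0,1]`) has a unique fixed point
`â ∈ (0, 1/2]`, the maximum of `((1−α) − f(α))/√2` over `[0,1]` equals `(1−2â)/√2`, and if
`f` is not the random-guessing line `α ↦ 1−α` then `0 < (1−2â)/√2 < 1/√2`. -/
theorem separation_at_fixed_point
    (f : ℝ → ℝ)
    (hmaps : Set.MapsTo f (Set.Icc 0 1) (Set.Icc 0 1))
    (hcont : ContinuousOn f (Set.Icc 0 1))
    (hconv : ConvexOn ℝ (Set.Icc 0 1) f)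
    (hanti : AntitoneOn f (Set.Icc 0 1))
    (hsymm : ∀ α ∈ Set.Icc (0 : ℝ) 1, f (f α) = α) :
    ∃ ahat : ℝ, ahat ∈ Set.Icc (0 : ℝ) 1 ∧ f ahat = ahat ∧ 0 < ahat ∧ ahat ≤ 1 / 2 ∧
      (∀ b ∈ Set.Icc (0 : ℝ) 1, f b = b → b = ahat) ∧
      IsGreatest ((fun α => ((1 - α) - f α) / Real.sqrt 2) '' Set.Icc 0 1)
        ((1 - 2 * ahat) / Real.sqrt 2) ∧
      ((¬ ∀ α ∈ Set.Icc (0 : ℝ) 1, f α = 1 - α) →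
        0 < (1 - 2 * ahat) / Real.sqrt 2 ∧ (1 - 2 * ahat) / Real.sqrt 2 < 1 / Real.sqrt 2) := by
  have m0 : (0:ℝ) ∈ Set.Icc (0:ℝ) 1 := by simp
  have m1 : (1:ℝ) ∈ Set.Icc (0:ℝ) 1 := by simp
  have f0 : f 0 = 1 := by
    have h := hanti m0 (hmaps m1) (hmaps m1).1
    rw [hsymm 1 m1] at h
    exact le_antisymm (hmaps m0).2 h
  have f1 : f 1 = 0 := by
    have h := hsymm 0 m0
    rwa [f0] at h
  have hle : ∀ α ∈ Set.Icc (0 : ℝ) 1, f α ≤ 1 - α := by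
    intro α hα
    have h := hconv.2 m0 m1 (sub_nonneg.2 hα.2) hα.1 (by ring)
    simpa [f0, f1] using h
  obtain ⟨a, ha, hfa'⟩ : (0:ℝ) ∈ (fun x => f x - x) '' Set.Icc 0 1 := by
    apply intermediate_value_Icc' zero_le_one (hcont.sub continuousOn_id)
    simp [f0, f1]
  have hfa : f a = a := by
    have h : f a - a = 0 := hfa'
    linarith
  have hge : ∀ α ∈ Set.Icc (0 : ℝ) 1, 2 * a ≤ α + f α := by
    intro α hα
    by_contra hlt
    push Not at hlt
    have h := hconv.2 hα (hmaps hα) (by norm_num : (0:ℝ) ≤ 1/2)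
      (by norm_num : (0:ℝ) ≤ 1/2) (by norm_num)
    rw [hsymm α hα] at h
    simp only [smul_eq_mul] at h
    have hb := hmaps hα
    have h2 := hanti (a := 1/2 * α + 1/2 * f α) (b := a)
      ⟨by linarith [hα.1, hb.1], by linarith [hα.2, hb.2]⟩ ha (by linarith)
    linarith
  have hapos : 0 < a := by
    rcases ha.1.lt_or_eq with h | h
    · exact h
    · rw [← h, f0] at hfa
      norm_num at hfa
  have hahalf : a ≤ 1 / 2 := by
    have := hle a ha
    linarith
  have hs : 0 < Real.sqrt 2 := by positivity
  refine ⟨a, ha, hfa, hapos, hahalf, ?_, ⟨⟨a, ha, ?_⟩, ?_⟩, ?_⟩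
  · intro b hb hfb
    rcases le_total a b with h | h
    · have := hanti ha hb h
      linarith
    · have := hanti hb ha h
      linarith
  · simp only [hfa]
    ring
  · rintro _ ⟨α, hα, rfl⟩
    have := hge α hα
    exact div_le_div_of_nonneg_right (by linarith) hs.le
  · intro hne
    refine ⟨div_pos ?_ hs, div_lt_div_of_pos_right (by linarith) hs⟩
    by_contra hcon
    apply hne
    intro α hα
    have h1 := hle α hα
    have h2 := hge α hα
    linarith
end

section
/- For ε ≥ 0 and δ ∈ [0,1), define f_{ε,δ} : [0,1] → ℝ by f_{ε,δ}(α) = max{0, 1 − δ − e^ε·α, e^{−ε}·(1 − δ − α)}. Then â := (1−δ)/(1+e^ε) satisfies f_{ε,δ}(â) = â, and sup_{α∈[0,1]} ((1−α) − f_{ε,δ}(α))/√2 = (e^ε − 1 + 2δ)/((1 + e^ε)·√2). -/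
open Real

/-- The tightest trade-off curve compatible with `(ε,δ)`-differential privacy:
`f_{ε,δ}(α) = max{0, 1 − δ − e^ε α, e^{−ε}(1 − δ − α)}`. -/
noncomputable def fEpsDelta (ε δ α : ℝ) : ℝ :=
  max 0 (max (1 - δ - Real.exp ε * α) (Real.exp (-ε) * (1 - δ - α)))

/-- Lemma E.2: for `ε ≥ 0` and `δ ∈ [0,1)`, the point
`â = (1−δ)/(1+e^ε)` is a fixed point of `f_{ε,δ}`, and
`sup_{α∈[0,1]} ((1−α) − f_{ε,δ}(α))/√2 = (e^ε − 1 + 2δ)/((1+e^ε)√2)`. -/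
theorem epsDelta_tradeoff_separation
    (ε δ : ℝ) (hε : 0 ≤ ε) (hδ : δ ∈ Set.Ico (0 : ℝ) 1) :
    fEpsDelta ε δ ((1 - δ) / (1 + Real.exp ε)) = (1 - δ) / (1 + Real.exp ε) ∧
    sSup ((fun α => ((1 - α) - fEpsDelta ε δ α) / Real.sqrt 2) '' Set.Icc 0 1)
      = (Real.exp ε - 1 + 2 * δ) / ((1 + Real.exp ε) * Real.sqrt 2) := by
  obtain ⟨h0, h1⟩ := hδ
  have hE : 1 ≤ Real.exp ε := Real.one_le_exp hε
  have hI : Real.exp (-ε) * Real.exp ε = 1 := by rw [← Real.exp_add]; simp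
  have hIpos : 0 < Real.exp (-ε) := Real.exp_pos _
  have hfix : fEpsDelta ε δ ((1 - δ) / (1 + Real.exp ε)) = (1 - δ) / (1 + Real.exp ε) ∧
      0 ≤ (1 - δ) / (1 + Real.exp ε) ∧ (1 - δ) / (1 + Real.exp ε) ≤ 1 ∧
      (∀ α, 2 * ((1 - δ) / (1 + Real.exp ε)) ≤ fEpsDelta ε δ α + α) := by
    have ha : (1 - δ) / (1 + Real.exp ε) * (1 + Real.exp ε) = 1 - δ := by
      field_simp
    have ha0 : 0 ≤ (1 - δ) / (1 + Real.exp ε) := div_nonneg (by linarith) (by linarith)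
    generalize (1 - δ) / (1 + Real.exp ε) = a at ha ha0
    unfold fEpsDelta
    generalize Real.exp ε = E at *
    generalize Real.exp (-ε) = I at *
    have hI1 : I ≤ 1 := by nlinarith
    rw [← ha]
    refine ⟨?_, ha0, by nlinarith, fun α => ?_⟩
    · have e1 : a * (1 + E) - E * a = a := by ring
      have e2 : I * (a * (1 + E) - a) = a := by linear_combination a * hI
      rw [e1, e2, max_self, max_eq_right ha0]
    · rcases le_total α a with h | h
      · have h2 : a * (1 + E) - E * α ≤
            max 0 (max (a * (1 + E) - E * α) (I * (a * (1 + E) - α))) :=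
          le_trans (le_max_left _ _) (le_max_right _ _)
        nlinarith [mul_nonneg (sub_nonneg.2 hE) (sub_nonneg.2 h)]
      · have h2 : I * (a * (1 + E) - α) ≤
            max 0 (max (a * (1 + E) - E * α) (I * (a * (1 + E) - α))) :=
          le_trans (le_max_right _ _) (le_max_right _ _)
        have e2 : I * (a * (1 + E) - α) = I * a + a - I * α := by linear_combination a * hI
        nlinarith [mul_nonneg (sub_nonneg.2 hI1) (sub_nonneg.2 h)]
  obtain ⟨hf, ha0, ha1, hle⟩ := hfix
  have hval : (Real.exp ε - 1 + 2 * δ) / ((1 + Real.exp ε) * Real.sqrt 2)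
      = (1 - 2 * ((1 - δ) / (1 + Real.exp ε))) / Real.sqrt 2 := by
    rw [← div_div]
    congr 1
    field_simp
    ring
  refine ⟨hf, ?_⟩
  rw [hval]
  apply IsGreatest.csSup_eq
  refine ⟨⟨_, ⟨ha0, ha1⟩, ?_⟩, ?_⟩
  · simp only [hf]
    congr 1
    ring
  · rintro _ ⟨α, -, rfl⟩
    have := hle α
    apply div_le_div_of_nonneg_right _ (Real.sqrt_nonneg 2)
    linarith
end
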